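/- Let p be a prime, let k be an integer with 2 ≤ k ≤ p−2, let G = (ℤ/pℤ) ⊕ (ℤ/pℤ), and let (e₁,e₂) be a basis of G. Let ℓ ≥ p and v ≥ 0 be integers with (p−1) + ℓ + v = 2p−2+k, let a₁,…,a_ℓ ∈ ℤ/pℤ with ∑_{i=1}^{p} a_i = 1 in ℤ/pℤ, let b₁,…,b_v ∈ ℤ/pℤ, and let x₁,…,x_v ∈ ℤ/pℤ with x_i ≠ 0 and x_i ≠ 1 for all i. Set S = e₁^[p−1] · ∏_{i=1}^{ℓ}(a_i·e₁ + e₂) · ∏_{i=1}^{v}(b_i·e₁ + x_i·e₂). If S has no nonempty zero-sum subsequence of length at most 2p−1−k, then the maximum multiplicity of the sequence ∏_{i=1}^{ℓ}(a_i·e₁ + e₂) equals p−1; that is, there exists a ∈ ℤ/pℤ such that exactly p−1 of the indices i ∈ [1,ℓ] satisfy a_i = a. -/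

import Mathlib

/-!
Write `S` in coordinates with respect to `(e₁, e₂)` and subtract `e₁` from every term other than
the `e₁`s. As a zero-sum subsequence of length at least `2p` splits, the hypothesis on `S` makes the
sheared sequence `e₁^[p-1-k] · ∏ (aᵢ - 1, 1) · ∏ (bⱼ - 1, xⱼ)`, of length `2p-2`, zero-sum free.

For a zero-sum free sequence `M`, let `f(h)` be the coefficient of `X^h` in `∏_{g ∈ M} (1 - X^g)`.
Then `f` vanishes at the negatives of the sums of terms that can be adjoined to `M`, while
`f(0) = 1`; it is symmetric under `h ↦ σ(M) - h`, and over a finite field with `q` elements it is a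
polynomial function of degree `(q-1) dim - |M|`. If two of the `aᵢ` differed by something else than
`0` or `±1`, then four zeros on a line and the symmetry would force a function of this kind of
degree at most `2` to have three zeros on a line through the origin, contradicting `f(0) = 1`.

So the `aᵢ` take at most two values `u`, `u + 1`, and `∑_{i ≤ p} aᵢ = 1` allows `u + 1` only once
among the first `p` terms.
-/

section ZeroSum

variable {G : Type*} [AddCommGroup G]

/-- A sequence is zero-sum free if none of its nonempty subsequences has sum zero. -/
def IsZeroSumFree (M : Multiset G) : Prop := ∀ T ≤ M, T ≠ 0 → T.sum ≠ 0

lemma IsZeroSumFree.mono {M N : Multiset G} (h : IsZeroSumFree N) (hMN : M ≤ N) : IsZeroSumFree M :=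
  fun T hT => h T (hT.trans hMN)

/-- A sequence with no nonempty zero-sum subsequence of length at most `n`. -/
def IsZeroSumFreeUpTo (n : ℕ) (M : Multiset G) : Prop :=
  ∀ T ≤ M, T ≠ 0 → T.card ≤ n → T.sum ≠ 0

/-- A nonempty zero-sum sequence none of whose proper nonempty subsequences has sum zero. -/
def IsMinimalZeroSum (M : Multiset G) : Prop :=
  Minimal (fun T : Multiset G => T ≠ 0 ∧ T.sum = 0) M

lemma IsMinimalZeroSum.isZeroSumFree {M N : Multiset G} (h : IsMinimalZeroSum M) (hN : N < M) :
    IsZeroSumFree N := fun _ hT hT0 hsum =>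
  h.not_prop_of_lt (hT.trans_lt hN) ⟨hT0, hsum⟩

lemma IsZeroSumFree.isMinimalZeroSum_cons {M : Multiset G} (h : IsZeroSumFree M) :
    IsMinimalZeroSum (-M.sum ::ₘ M) := by
  refine ⟨⟨Multiset.cons_ne_zero, by simp⟩, ?_⟩
  rintro T ⟨hT0, hsum⟩ hTM
  by_cases hmem : -M.sum ∈ T
  · obtain ⟨T, rfl⟩ := Multiset.exists_cons_of_mem hmem
    obtain ⟨C, rfl⟩ := Multiset.le_iff_exists_add.1 ((Multiset.cons_le_cons_iff _).1 hTM)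
    have hC : C.sum = 0 := by simpa using hsum
    have hC0 : C = 0 := by
      by_contra hne
      exact h C (Multiset.le_add_left C T) hne hC
    simp [hC0]
  · exact absurd hsum (h T ((Multiset.le_cons_of_notMem hmem).1 hTM) hT0)

lemma IsZeroSumFree.count_lt [DecidableEq G] {M : Multiset G} (h : IsZeroSumFree M) {n : ℕ}
    (hn : n ≠ 0) {g : G} (hg : n • g = 0) : M.count g < n := by
  by_contra! hle
  refine h (.replicate n g) (Multiset.le_count_iff_replicate_le.1 hle) ?_ (by simpa using hg)
  simpa [← Multiset.card_pos, Nat.pos_iff_ne_zero] using hn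

lemma IsZeroSumFreeUpTo.of_map {H : Type*} [AddCommGroup H] {n : ℕ} {M : Multiset H} (φ : H →+ G)
    (h : IsZeroSumFreeUpTo n (M.map φ)) : IsZeroSumFreeUpTo n M := by
  intro T hT hT0 hcard hsum
  refine h (T.map φ) (Multiset.map_le_map hT) ?_ ?_ ?_
  · rwa [Ne, Multiset.map_eq_zero]
  · rwa [Multiset.card_map]
  · rw [← map_multiset_sum, hsum, map_zero]

lemma IsZeroSumFreeUpTo.isMinimalZeroSum {n : ℕ} {T : Multiset G} (h : IsZeroSumFreeUpTo n T)
    (h0 : T ≠ 0) (hsum : T.sum = 0) (hcard : T.card ≤ 2 * n + 1) :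
    IsMinimalZeroSum T := by
  by_contra hmin
  obtain ⟨A, hAT, hA0, hA⟩ := (not_minimal_iff_exists_lt ⟨h0, hsum⟩).1 hmin
  obtain ⟨B, rfl⟩ := Multiset.le_iff_exists_add.1 hAT.le
  have hB0 : B ≠ 0 := fun hB => hAT.ne (by rw [hB, add_zero])
  have hB : B.sum = 0 := by rwa [Multiset.sum_add, hA, zero_add] at hsum
  have hAlong : n < A.card := by
    by_contra! hshort
    exact h A (Multiset.le_add_right A B) hA0 hshort hA
  have hBlong : n < B.card := by
    by_contra! hshort
    exact h B (Multiset.le_add_left B A) hB0 hshort hB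
  rw [Multiset.card_add] at hcard
  omega

end ZeroSum

section SignedCount

variable {G : Type*} [AddCommGroup G] (R : Type*) [CommRing R] [DecidableEq G]

/-- The number of subsequences of `M` with sum `h`, counted with sign `(-1)^length`; equivalently,
the coefficient of `X^h` in the element `∏_{g ∈ M} (1 - X^g)` of the group algebra of `G`. -/
def signedCount (M : Multiset G) (h : G) : R :=
  ((M.powerset.filter fun T => T.sum = h).map fun T => (-1) ^ T.card).sum

lemma signedCount_zero (h : G) : signedCount R 0 h = if h = 0 then 1 else 0 := by
  by_cases hh : h = 0
  · simp [signedCount, Multiset.filter_singleton, hh]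
  · simp [signedCount, Multiset.filter_singleton, hh, Ne.symm hh]

lemma signedCount_cons (g : G) (M : Multiset G) (h : G) :
    signedCount R (g ::ₘ M) h = signedCount R M h - signedCount R M (h - g) := by
  have hsum (T : Multiset G) : (g ::ₘ T).sum = h ↔ T.sum = h - g := by
    rw [Multiset.sum_cons, eq_sub_iff_add_eq']
  simp [signedCount, Multiset.filter_map, -Multiset.sum_cons, hsum, pow_succ,
    sub_eq_add_neg]

variable {R}

lemma exists_le_sum_eq_of_signedCount_ne_zero {M : Multiset G} {h : G}
    (hM : signedCount R M h ≠ 0) : ∃ T ≤ M, T.sum = h := by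
  by_contra! hT
  have : M.powerset.filter (fun T => T.sum = h) = 0 :=
    Multiset.filter_eq_nil.2 fun T hTM => hT T (Multiset.mem_powerset.1 hTM)
  exact hM (by rw [signedCount, this, Multiset.map_zero, Multiset.sum_zero])

lemma signedCount_sum_sub (M : Multiset G) (h : G) :
    signedCount R M (M.sum - h) = (-1) ^ M.card * signedCount R M h := by
  induction M using Multiset.induction generalizing h with
  | empty => simp [signedCount_zero]
  | cons g M ih =>
    have hshift : g + M.sum - h = M.sum - (h - g) := by abel
    have hunshift : M.sum - (h - g) - g = M.sum - h := by abel
    rw [signedCount_cons, signedCount_cons, Multiset.sum_cons, Multiset.card_cons, hshift, hunshift,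
      ih, ih]
    ring

lemma IsZeroSumFree.signedCount_neg_sum {T M : Multiset G} (h : IsZeroSumFree (T + M))
    (hT : T ≠ 0) : signedCount R M (-T.sum) = 0 := by
  by_contra hne
  obtain ⟨U, hU, hsum⟩ := exists_le_sum_eq_of_signedCount_ne_zero hne
  refine h (T + U) (add_le_add_right hU T) (fun h0 => hT (add_eq_zero.1 h0).1) ?_
  rw [Multiset.sum_add, hsum, add_neg_cancel]

lemma IsZeroSumFree.signedCount_self {M : Multiset G} (h : IsZeroSumFree M) :
    signedCount R M 0 = 1 := by
  induction M using Multiset.induction with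
  | empty => simp [signedCount_zero]
  | cons g M ih =>
    have hg : signedCount R M (-g) = 0 := by
      simpa using (h : IsZeroSumFree ({g} + M)).signedCount_neg_sum (R := R)
        (Multiset.singleton_ne_zero g)
    rw [signedCount_cons, ih (h.mono (Multiset.le_cons_self M g)), zero_sub, hg, sub_zero]

end SignedCount

section AffineFunctions

open Polynomial

variable (R V : Type*) [CommRing R] [AddCommGroup V] [Module R V]

/-- The functions `V → R` that are the sum of a linear form and a constant. The power
`affineFunctions R V ^ d`, taken in the algebra of all functions, is the space of polynomial
functions of degree at most `d` on `V`. -/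
def affineFunctions : Submodule R (V → R) :=
  1 ⊔ LinearMap.range (LinearMap.ltoFun R V R R)

variable {R V}

lemma mem_affineFunctions {f : V → R} :
    f ∈ affineFunctions R V ↔ ∃ (φ : Module.Dual R V) (c : R), ∀ z, f z = φ z + c := by
  simp only [affineFunctions, Submodule.mem_sup, Submodule.mem_one, LinearMap.mem_range]
  constructor
  · rintro ⟨_, ⟨c, rfl⟩, _, ⟨φ, rfl⟩, rfl⟩
    exact ⟨φ, c, fun z => add_comm _ _⟩
  · rintro ⟨φ, c, h⟩
    exact ⟨_, ⟨c, rfl⟩, _, ⟨φ, rfl⟩, funext fun z => by rw [h, add_comm]; rfl⟩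

lemma one_mem_affineFunctions : (1 : V → R) ∈ affineFunctions R V :=
  mem_affineFunctions.2 ⟨0, 1, fun z => by simp⟩

lemma sub_translate_mem_affineFunctions_pow {d : ℕ} {f : V → R}
    (hf : f ∈ affineFunctions R V ^ (d + 1)) (y : V) :
    (fun z => f z - f (z - y)) ∈ affineFunctions R V ^ d := by
  have hlin {f : V → R} (hf : f ∈ affineFunctions R V) : ∃ c, ∀ z, f z - f (z - y) = c := by
    obtain ⟨φ, c, h⟩ := mem_affineFunctions.1 hf
    exact ⟨φ y, fun z => by rw [h, h, map_sub]; ring⟩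
  have htrans {f : V → R} (hf : f ∈ affineFunctions R V) :
      (fun z => f (z - y)) ∈ affineFunctions R V := by
    obtain ⟨φ, c, h⟩ := mem_affineFunctions.1 hf
    exact mem_affineFunctions.2 ⟨φ, c - φ y, fun z => by rw [h, map_sub]; ring⟩
  induction d generalizing f with
  | zero =>
    rw [zero_add, pow_one] at hf
    obtain ⟨c, hc⟩ := hlin hf
    exact Submodule.mem_one.2 ⟨c, funext fun z => (hc z).symm⟩
  | succ d ih =>
    rw [pow_succ'] at hf
    induction hf using Submodule.mul_induction_on' with
    | mem_mul_mem a ha g hg =>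
      obtain ⟨c, hc⟩ := hlin ha
      have hleibniz : (fun z => (a * g) z - (a * g) (z - y)) =
          c • g + (fun z => a (z - y)) * fun z => g z - g (z - y) := by
        funext z
        simp only [Pi.mul_apply, Pi.add_apply, Pi.smul_apply, smul_eq_mul, ← hc z]
        ring
      rw [hleibniz]
      refine add_mem (Submodule.smul_mem _ c hg) ?_
      rw [pow_succ']
      exact Submodule.mul_mem_mul (htrans ha) (ih hg)
    | add f _ g _ hf hg =>
      convert add_mem hf hg using 1
      funext z
      simp only [Pi.add_apply]
      ring

lemma exists_polynomial_eval_eq_on_line {d : ℕ} {f : V → R} (hf : f ∈ affineFunctions R V ^ d)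
    (z y : V) : ∃ P : R[X], P.natDegree ≤ d ∧ ∀ t, P.eval t = f (z + t • y) := by
  induction hf using Submodule.pow_induction_on_left' with
  | algebraMap c => exact ⟨C c, by simp, fun t => by simp⟩
  | add f g d _ _ hf hg =>
    obtain ⟨P, hP, hPf⟩ := hf
    obtain ⟨Q, hQ, hQg⟩ := hg
    exact ⟨P + Q, natDegree_add_le_of_degree_le hP hQ, fun t => by simp [hPf, hQg]⟩
  | mem_mul a ha d g _ hg =>
    obtain ⟨φ, c, h⟩ := mem_affineFunctions.1 ha
    obtain ⟨Q, hQ, hQg⟩ := hg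
    refine ⟨(C (φ y) * X + C (φ z + c)) * Q, ?_, fun t => ?_⟩
    · rw [Nat.succ_eq_one_add]
      exact natDegree_mul_le_of_le natDegree_linear_le hQ
    · simp [hQg, h]
      ring_nf

variable [IsDomain R] in
lemma eq_zero_on_line_of_lt_card {d : ℕ} {f : V → R} (hf : f ∈ affineFunctions R V ^ d)
    (z y : V) (s : Finset R) (hs : d < s.card) (hzero : ∀ t ∈ s, f (z + t • y) = 0) (t : R) :
    f (z + t • y) = 0 := by
  obtain ⟨P, hP, hPf⟩ := exists_polynomial_eval_eq_on_line hf z y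
  have hP0 : P = 0 := eq_zero_of_natDegree_lt_card_of_eval_eq_zero' P s
    (fun t ht => (hPf t).trans (hzero t ht)) (hP.trans_lt hs)
  rw [← hPf, hP0, eval_zero]

end AffineFunctions

lemma finsetProd_mem_pow_card {R A ι : Type*} [CommSemiring R] [CommSemiring A] [Algebra R A]
    {M : Submodule R A} (s : Finset ι) {f : ι → A} (hf : ∀ i ∈ s, f i ∈ M) :
    ∏ i ∈ s, f i ∈ M ^ s.card := by
  induction s using Finset.cons_induction with
  | empty => exact Submodule.mem_one.2 ⟨1, by simp⟩
  | cons i s hi ih =>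
    rw [Finset.prod_cons, Finset.card_cons, pow_succ']
    exact Submodule.mul_mem_mul (hf i (Finset.mem_cons_self i s))
      (ih fun j hj => hf j (Finset.mem_cons_of_mem hj))

section Olson

open Module

variable {F V : Type*} [Field F] [Fintype F] [AddCommGroup V] [Module F V] [Module.Finite F V]

lemma indicator_zero_mem_affineFunctions_pow [DecidableEq V] :
    (fun z : V => if z = 0 then (1 : F) else 0) ∈
      affineFunctions F V ^ ((Fintype.card F - 1) * finrank F V) := by
  let B := finBasis F V
  have hq : Fintype.card F - 1 ≠ 0 := Nat.sub_ne_zero_of_lt Fintype.one_lt_card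
  have hfactor (i : Fin (finrank F V)) : 1 - (B.coord i : V → F) ^ (Fintype.card F - 1) ∈
      affineFunctions F V ^ (Fintype.card F - 1) := by
    refine sub_mem ?_ ?_
    · simpa only [one_pow] using Submodule.pow_mem_pow _
        (one_mem_affineFunctions (R := F) (V := V)) (Fintype.card F - 1)
    · exact Submodule.pow_mem_pow _ (mem_affineFunctions.2 ⟨B.coord i, 0, fun z => by simp⟩) _
  have hprod : (fun z : V => if z = 0 then (1 : F) else 0) =
      ∏ i, (1 - (B.coord i : V → F) ^ (Fintype.card F - 1)) := by
    funext z
    rw [Finset.prod_apply]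
    split_ifs with hz
    · simp [hz, hq]
    · obtain ⟨i, hi⟩ : ∃ i, B.coord i z ≠ 0 := by
        by_contra! hz0
        exact hz (B.forall_coord_eq_zero_iff.1 hz0)
      refine (Finset.prod_eq_zero (Finset.mem_univ i) ?_).symm
      rw [Pi.sub_apply, Pi.pow_apply, Pi.one_apply, FiniteField.pow_card_sub_one_eq_one _ hi,
        sub_self]
  rw [hprod, pow_mul]
  simpa using finsetProd_mem_pow_card Finset.univ fun i _ => hfactor i

lemma signedCount_mem_affineFunctions_pow [DecidableEq V] {M : Multiset V} {d : ℕ}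
    (hd : M.card + d = (Fintype.card F - 1) * finrank F V) :
    signedCount F M ∈ affineFunctions F V ^ d := by
  induction M using Multiset.induction generalizing d with
  | empty =>
    rw [Multiset.card_zero, zero_add] at hd
    rw [funext (signedCount_zero F), hd]
    exact indicator_zero_mem_affineFunctions_pow
  | cons g M ih =>
    rw [funext (signedCount_cons F g M)]
    rw [Multiset.card_cons, add_assoc, add_comm 1] at hd
    exact sub_translate_mem_affineFunctions_pow (ih hd) g

lemma signedCount_eq_zero_of_lt_card [DecidableEq V] {M : Multiset V}
    (hM : (Fintype.card F - 1) * finrank F V < M.card) : signedCount F M = 0 := by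
  induction M using Multiset.induction with
  | empty => simp at hM
  | cons g M ih =>
    rw [Multiset.card_cons] at hM
    funext h
    rw [signedCount_cons]
    rcases (Nat.le_of_lt_succ hM).eq_or_lt with hcard | hlt
    · have hconst : signedCount F M ∈ affineFunctions F V ^ 0 :=
        signedCount_mem_affineFunctions_pow (by rw [add_zero, hcard])
      obtain ⟨c, hc⟩ := Submodule.mem_one.1 (hconst : signedCount F M ∈ (1 : Submodule F (V → F)))
      simp [← hc]
    · simp [ih hlt]

variable (F) in
theorem IsZeroSumFree.card_le {M : Multiset V} (h : IsZeroSumFree M) :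
    M.card ≤ (Fintype.card F - 1) * finrank F V := by
  classical
  by_contra! hlt
  have h1 : signedCount F M 0 = 1 := h.signedCount_self
  rw [signedCount_eq_zero_of_lt_card hlt] at h1
  exact zero_ne_one h1

variable (F) in
lemma IsMinimalZeroSum.card_le {M : Multiset V} (h : IsMinimalZeroSum M) :
    M.card ≤ (Fintype.card F - 1) * finrank F V + 1 := by
  obtain ⟨g, hg⟩ := Multiset.exists_mem_of_ne_zero h.1.1
  obtain ⟨N, rfl⟩ := Multiset.exists_cons_of_mem hg
  rw [Multiset.card_cons]
  gcongr
  exact (h.isZeroSumFree (Multiset.lt_cons_self N g)).card_le F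

end Olson

section Shear

lemma exists_le_le_eq_add_of_le_add {α : Type*} {T A B : Multiset α} (h : T ≤ A + B) :
    ∃ T₁ ≤ A, ∃ T₂ ≤ B, T = T₁ + T₂ := by
  classical
  refine ⟨T ∩ A, Multiset.inter_le_right, T - A, Multiset.sub_le_iff_le_add'.2 h, ?_⟩
  rw [add_comm, Multiset.sub_add_inter]

variable {p k : ℕ} [Fact p.Prime] {V : Type*} [AddCommGroup V] [Module (ZMod p) V]

lemma IsZeroSumFreeUpTo.sub_lt_card_mod (hV : Module.finrank (ZMod p) V = 2) (hk : k < p)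
    {Z : Multiset V} (h : IsZeroSumFreeUpTo (2 * p - 1 - k) Z) (h0 : Z ≠ 0) (hsum : Z.sum = 0)
    (hcard : Z.card ≤ 2 * p - 2 + k) : p - 1 - k < Z.card % p := by
  have : Module.Finite (ZMod p) V := Module.finite_of_finrank_pos (by omega)
  have hlong : 2 * p - 1 - k < Z.card := by
    by_contra! hshort
    exact h Z le_rfl h0 hshort hsum
  have hle : Z.card ≤ 2 * (2 * p - 1 - k) + 1 → Z.card ≤ (p - 1) * 2 + 1 := fun hcard => by
    simpa only [hV, ZMod.card] using (h.isMinimalZeroSum h0 hsum hcard).card_le (ZMod p)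
  have hdiv := Nat.div_add_mod Z.card p
  have hquot : Z.card / p < 3 := Nat.div_lt_of_lt_mul (by omega)
  generalize Z.card % p = r at *
  generalize Z.card / p = q at *
  interval_cases q <;> omega

lemma exists_replicate_add_sum_eq_zero {e : V} {i : ℕ} {U : Multiset V} (hi : i < p)
    (hsum : (Multiset.replicate i e + U.map (· - e)).sum = 0) :
    ∃ m < p, (m + U.card) % p = i ∧ (Multiset.replicate m e + U).sum = 0 := by
  have hU : i • e + (U.sum - U.card • e) = 0 := by simpa using hsum
  set m := ((i : ZMod p) - U.card).val
  have hm : (m : ZMod p) = i - U.card := ZMod.natCast_zmod_val _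
  refine ⟨m, ZMod.val_lt _, ?_, ?_⟩
  · have hcong : ((m + U.card : ℕ) : ZMod p) = i := by rw [Nat.cast_add, hm, sub_add_cancel]
    rw [(ZMod.natCast_eq_natCast_iff' _ _ p).1 hcong, Nat.mod_eq_of_lt hi]
  · rw [Multiset.sum_add, Multiset.sum_replicate, ← Nat.cast_smul_eq_nsmul (ZMod p), hm, sub_smul,
      Nat.cast_smul_eq_nsmul, Nat.cast_smul_eq_nsmul, ← hU]
    abel

theorem IsZeroSumFreeUpTo.isZeroSumFree_shear (hV : Module.finrank (ZMod p) V = 2) (hk : k < p)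
    {e : V} {M : Multiset V} (hM : M.card = p - 1 + k)
    (h : IsZeroSumFreeUpTo (2 * p - 1 - k) (Multiset.replicate (p - 1) e + M)) :
    IsZeroSumFree (Multiset.replicate (p - 1 - k) e + M.map (· - e)) := by
  intro T hT hT0 hsum
  obtain ⟨T₁, hT₁, T₂, hT₂, rfl⟩ := exists_le_le_eq_add_of_le_add hT
  obtain ⟨i, hi, rfl⟩ := Multiset.le_replicate_iff.1 hT₁
  obtain ⟨U, rfl⟩ : ∃ U : Multiset V, T₂ = U.map (· - e) := ⟨T₂.map (· + e), by simp⟩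
  have hU : U ≤ M := (Multiset.map_le_map_iff sub_left_injective).1 hT₂
  obtain ⟨m, hm, hmod, hZsum⟩ := exists_replicate_add_sum_eq_zero (p := p) (by omega) hsum
  set Z := Multiset.replicate m e + U with hZ
  have hZcard : Z.card = m + U.card := by simp [hZ]
  have hZle : Z ≤ Multiset.replicate (p - 1) e + M :=
    add_le_add ((Multiset.replicate_le_replicate e).2 (by omega)) hU
  have hZ0 : Z ≠ 0 := by
    intro hZ0
    have hmU : m + U.card = 0 := by rw [← hZcard, hZ0, Multiset.card_zero]
    have hU0 : U = 0 := Multiset.card_eq_zero.1 (by omega)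
    have hi0 : i = 0 := by rw [← hmod, hmU, Nat.zero_mod]
    simp [hi0, hU0] at hT0
  have hZbound : Z.card ≤ 2 * p - 2 + k := by
    have := Multiset.card_le_card hU
    omega
  have hlt := IsZeroSumFreeUpTo.sub_lt_card_mod hV hk (fun A hA => h A (hA.trans hZle)) hZ0 hZsum
    hZbound
  rw [hZcard, hmod] at hlt
  exact hlt.not_ge hi

end Shear

section Plane

variable {F : Type*} [Field F]

lemma eq_zero_on_level_of_lt_card {d : ℕ} {f : F × F → F} (hf : f ∈ affineFunctions F (F × F) ^ d)
    {y : F} (s : Finset F) (hs : d < s.card) (hzero : ∀ t ∈ s, f (t, y) = 0) (t : F) :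
    f (t, y) = 0 := by
  have hline := eq_zero_on_line_of_lt_card hf (0, y) (1, 0) s hs
  simp only [Prod.smul_mk, smul_eq_mul, mul_one, mul_zero, Prod.mk_add_mk, zero_add,
    add_zero] at hline
  exact hline hzero t

lemma signedCount_eq_zero_on_reflected_level [DecidableEq F] {L : Multiset (F × F)} {y : F}
    (h : ∀ t, signedCount F L (t, y) = 0) (t : F) : signedCount F L (t, L.sum.2 - y) = 0 := by
  have hsymm := signedCount_sum_sub (R := F) L (L.sum.1 - t, y)
  rwa [h, mul_zero, Prod.sub_def, sub_sub_cancel] at hsymm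

variable [Fintype F]

lemma signedCount_eq_zero_on_level [DecidableEq F] {L : Multiset (F × F)} {α β : F}
    (hcard : L.card + 3 = (Fintype.card F - 1) * 2)
    (h : IsZeroSumFree ({(1, 0), (α, 1), (β, 1)} + L))
    (hne : α ≠ β) (hαβ : α ≠ β + 1) (hβα : β ≠ α + 1) (t : F) :
    signedCount F L (t, -1) = 0 := by
  have hdeg : signedCount F L ∈ affineFunctions F (F × F) ^ 3 :=
    signedCount_mem_affineFunctions_pow (by simpa using hcard)
  have hzero {γ : F} (hγ : {(1, 0), (γ, 1)} ≤ ({(1, 0), (α, 1), (β, 1)} : Multiset (F × F))) :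
      signedCount F L (-γ, -1) = 0 ∧ signedCount F L (-1 - γ, -1) = 0 := by
    have hγL : IsZeroSumFree ({(1, 0), (γ, 1)} + L) := h.mono (add_le_add_left hγ L)
    have hγL' : IsZeroSumFree ({(γ, 1)} + L) :=
      hγL.mono (add_le_add_left (Multiset.le_cons_self _ _) L)
    constructor
    · simpa using hγL'.signedCount_neg_sum (R := F) (Multiset.singleton_ne_zero _)
    · simpa [neg_add, sub_eq_add_neg, add_comm] using
        hγL.signedCount_neg_sum (R := F) Multiset.cons_ne_zero
  obtain ⟨hα, hα'⟩ := hzero (γ := α) (by simp)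
  obtain ⟨hβ, hβ'⟩ := hzero (γ := β) (by simp)
  refine eq_zero_on_level_of_lt_card hdeg {-α, -1 - α, -β, -1 - β} ?_
    (by simp [hα, hα', hβ, hβ']) t
  have hβ_mem : -β ≠ -1 - β := fun h0 => one_ne_zero (by linear_combination h0)
  have hα_mem : -1 - α ∉ ({-β, -1 - β} : Finset F) := by
    rw [Finset.mem_insert, Finset.mem_singleton, not_or]
    exact ⟨fun h0 => hβα (by linear_combination h0), fun h0 => hne (by linear_combination -h0)⟩
  have hα'_mem : -α ∉ ({-1 - α, -β, -1 - β} : Finset F) := by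
    simp only [Finset.mem_insert, Finset.mem_singleton, not_or]
    exact ⟨fun h0 => one_ne_zero (by linear_combination h0),
      fun h0 => hne (by linear_combination -h0), fun h0 => hαβ (by linear_combination -h0)⟩
  rw [Finset.card_insert_of_notMem hα'_mem, Finset.card_insert_of_notMem hα_mem,
    Finset.card_pair hβ_mem]
  norm_num

theorem IsZeroSumFree.eq_or_eq_add_one (h2 : (2 : F) ≠ 0) {L : Multiset (F × F)} {α β : F}
    (h : IsZeroSumFree ({(1, 0), (α, 1), (β, 1)} + L))
    (hcard : L.card + 3 = (Fintype.card F - 1) * 2) (hL2 : L.sum.2 + 2 ≠ 0)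
    (hL3 : L.sum.2 + 3 ≠ 0) : α = β ∨ α = β + 1 ∨ β = α + 1 := by
  classical
  by_contra! hne
  obtain ⟨hne, hαβ, hβα⟩ := hne
  have hlevel := signedCount_eq_zero_on_level hcard h hne hαβ hβα
  have hlevel' := signedCount_eq_zero_on_reflected_level hlevel
  set f := signedCount F ((1, 0) ::ₘ L) with hf
  have hdeg : f ∈ affineFunctions F (F × F) ^ 2 :=
    signedCount_mem_affineFunctions_pow (by simpa using hcard)
  have hsplit : ({(1, 0), (α, 1), (β, 1)} : Multiset (F × F)) + L =
      {(α, 1), (β, 1)} + ((1, 0) ::ₘ L) := by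
    simp only [Multiset.insert_eq_cons, Multiset.cons_add, Multiset.add_cons]
  rw [hsplit] at h
  have hone : f 0 = 1 := (h.mono (Multiset.le_add_left _ _)).signedCount_self
  set c : F × F := ((α + β) / 2, 1) with hc
  have hpair : f ((-2 : F) • c) = 0 := by
    have hsum : (-2 : F) • c = -({(α, 1), (β, 1)} : Multiset (F × F)).sum := by
      ext
      · simp [hc]
        field_simp
        ring
      · simp [hc, ← one_add_one_eq_two]
    rw [hsum]
    exact h.signedCount_neg_sum Multiset.cons_ne_zero
  have hlow : f ((-1 : F) • c) = 0 := by simp [hf, hc, signedCount_cons, hlevel]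
  have hhigh : f ((L.sum.2 + 1) • c) = 0 := by
    rw [sub_neg_eq_add] at hlevel'
    simp [hf, hc, signedCount_cons, hlevel']
  have hthree : ({-2, -1, L.sum.2 + 1} : Finset F).card = 3 := by
    refine Finset.card_eq_three.2 ⟨_, _, _, ?_, ?_, ?_, rfl⟩
    · exact fun h0 => one_ne_zero (by linear_combination -h0)
    · exact fun h0 => hL3 (by linear_combination -h0)
    · exact fun h0 => hL2 (by linear_combination -h0)
  have hline := eq_zero_on_line_of_lt_card hdeg 0 c {-2, -1, L.sum.2 + 1} (by omega) ?_ 0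
  · simp [hone] at hline
  · simp only [Finset.mem_insert, Finset.mem_singleton, forall_eq_or_imp, forall_eq, zero_add]
    exact ⟨hpair, hlow, hhigh⟩

theorem IsMinimalZeroSum.eq_or_eq_add_one (h2 : (2 : F) ≠ 0) {U : Multiset (F × F)}
    (hU : IsMinimalZeroSum U) (hcard : U.card = (Fintype.card F - 1) * 2 + 1) (he : (1, 0) ∈ U)
    {α β : F} (hα : (α, 1) ∈ U) (hβ : (β, 1) ∈ U)
    {w : F × F} (hw : w ∈ U) (hw0 : w.2 ≠ 0) (hw1 : w.2 ≠ 1) :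
    α = β ∨ α = β + 1 ∨ β = α + 1 := by
  by_cases hne : α = β
  · exact .inl hne
  have hnodup : ({w, (1, 0), (α, 1), (β, 1)} : Multiset (F × F)).Nodup := by
    simp [Prod.ext_iff, hne, hw0, hw1]
  obtain ⟨L, rfl⟩ : ∃ L, U = {w, (1, 0), (α, 1), (β, 1)} + L := by
    refine Multiset.le_iff_exists_add.1 ((Multiset.le_iff_subset hnodup).2 ?_)
    simp [Multiset.subset_iff, he, hα, hβ, hw]
  have hsum : w.2 + (L.sum.2 + 2) = 0 := by
    have hsnd := congrArg Prod.snd hU.1.2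
    simp only [Multiset.insert_eq_cons, Multiset.sum_add, Multiset.sum_cons,
      Multiset.sum_singleton, Prod.snd_add, Prod.snd_zero] at hsnd
    linear_combination hsnd
  refine IsZeroSumFree.eq_or_eq_add_one h2 (L := L) (hU.isZeroSumFree ?_) ?_ ?_ ?_
  · exact add_lt_add_left (Multiset.lt_cons_self _ w) L
  · simp only [Multiset.insert_eq_cons, Multiset.card_add, Multiset.card_cons,
      Multiset.card_singleton] at hcard
    omega
  · exact fun h0 => hw0 (by linear_combination hsum - h0)
  · exact fun h0 => hw1 (by linear_combination hsum - h0)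

end Plane

section Values

lemma exists_forall_eq_or_eq_add_one {R ι : Type*} [CommRing R] (h3 : (3 : R) ≠ 0) {a : ι → R}
    (h : ∀ i j, a i = a j ∨ a i = a j + 1 ∨ a j = a i + 1) :
    ∃ u, ∀ i, a i = u ∨ a i = u + 1 := by
  by_cases hstep : ∃ i j, a i = a j + 1
  · obtain ⟨i, j, hij⟩ := hstep
    refine ⟨a j, fun m => ?_⟩
    rcases h m j with hm | hm | hm
    · exact .inl hm
    · exact .inr hm
    · rcases h m i with hmi | hmi | hmi
      · exact .inr (hmi.trans hij)
      · exact absurd (by linear_combination -hmi - hij - hm) h3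
      · exact .inl (by linear_combination hij - hmi)
  · push Not at hstep
    rcases isEmpty_or_nonempty ι with hι | ⟨⟨i⟩⟩
    · exact ⟨0, fun i => hι.elim i⟩
    · exact ⟨a i, fun j => .inl (by grind)⟩

lemma card_sub_one_le_card_filter_of_sum_eq_one {p : ℕ} [Fact p.Prime] {ι : Type*} [Fintype ι]
    {a : ι → ZMod p} {u : ZMod p} (hu : ∀ i, a i = u ∨ a i = u + 1) {I : Finset ι}
    (hI : I.card = p) (hsum : ∑ i ∈ I, a i = 1) :
    p - 1 ≤ (Finset.univ.filter fun i => a i = u).card := by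
  have hterm (i : ι) : a i - u = if a i ≠ u then 1 else 0 := by
    rcases hu i with h | h <;> simp [h]
  have hcast : ((I.filter fun i => a i ≠ u).card : ZMod p) = 1 := by
    rw [← Finset.sum_boole, ← Finset.sum_congr rfl fun i _ => hterm i, Finset.sum_sub_distrib, hsum,
      Finset.sum_const, hI, nsmul_eq_mul, CharP.cast_eq_zero, zero_mul, sub_zero]
  have hpartition : (I.filter fun i => a i = u).card + (I.filter fun i => a i ≠ u).card = p :=
    (Finset.card_filter_add_card_filter_not _).trans hI
  have hone : (I.filter fun i => a i ≠ u).card = 1 := by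
    have hne : (I.filter fun i => a i ≠ u).card ≠ p := fun hp => by simp [hp] at hcast
    rw [← Nat.cast_one, ZMod.natCast_eq_natCast_iff',
      Nat.mod_eq_of_lt (Fact.out : p.Prime).one_lt] at hcast
    rwa [Nat.mod_eq_of_lt (by omega)] at hcast
  calc p - 1 ≤ (I.filter fun i => a i = u).card := by omega
    _ ≤ _ := Finset.card_le_card (Finset.filter_subset_filter _ I.subset_univ)

end Values

section NormalForm

variable {R ι κ : Type*} [Ring R] [Fintype ι] [Fintype κ] {m : ℕ} {a : ι → R} {b x : κ → R}

/-- The sequence `e₁^[m] · ∏ (aᵢe₁ + e₂) · ∏ (bⱼe₁ + xⱼe₂)` in coordinates with respect to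
`(e₁, e₂)`. Both the sequence `S` of the theorem and its shear have this shape. -/
def normalFormSeq (m : ℕ) (a : ι → R) (b x : κ → R) : Multiset (R × R) :=
  Multiset.replicate m (1, 0) +
    ((Finset.univ.val.map fun i => (a i, 1)) + Finset.univ.val.map fun j => (b j, x j))

lemma card_normalFormSeq :
    (normalFormSeq m a b x).card = m + (Fintype.card ι + Fintype.card κ) := by
  simp [normalFormSeq]

lemma one_zero_mem_normalFormSeq (hm : m ≠ 0) : (1, 0) ∈ normalFormSeq m a b x :=
  Multiset.mem_add.2 (.inl (Multiset.mem_replicate.2 ⟨hm, rfl⟩))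

lemma left_mem_normalFormSeq (i : ι) : (a i, 1) ∈ normalFormSeq m a b x :=
  Multiset.mem_add.2 (.inr (Multiset.mem_add.2 (.inl
    (Multiset.mem_map_of_mem _ (Finset.mem_univ i)))))

lemma right_mem_normalFormSeq (j : κ) : (b j, x j) ∈ normalFormSeq m a b x :=
  Multiset.mem_add.2 (.inr (Multiset.mem_add.2 (.inr
    (Multiset.mem_map_of_mem _ (Finset.mem_univ j)))))

lemma IsZeroSumFree.card_filter_eq_lt [DecidableEq R] {n : ℕ} [NeZero n] [CharP R n]
    (h : IsZeroSumFree (normalFormSeq m a b x)) (c : R) :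
    (Finset.univ.filter fun i => a i = c).card < n := by
  have hcount : (Finset.univ.filter fun i => a i = c).card =
      (Finset.univ.val.map fun i => (a i, (1 : R))).count (c, 1) := by
    simp [Multiset.count_map, Finset.card, eq_comm]
  rw [hcount]
  refine (h.mono ?_).count_lt (NeZero.ne n) ?_
  · exact (Multiset.le_add_right _ _).trans (Multiset.le_add_left _ _)
  · simp

end NormalForm

section Multiplicity

variable {p k m : ℕ} {ι κ : Type*} [Fintype ι] [Fintype κ] {a : ι → ZMod p} {b x : κ → ZMod p}

lemma natCast_zmod_ne_zero_of_lt {n : ℕ} (hn : 0 < n) (hnp : n < p) : (n : ZMod p) ≠ 0 :=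
  (ZMod.natCast_eq_zero_iff n p).not.2 (Nat.not_dvd_of_pos_of_lt hn hnp)

lemma exists_mem_snd_ne_zero_ne_one (hk : 2 ≤ k) (hkp : k < p)
    (hlen : Fintype.card ι + Fintype.card κ = p - 1 + k) (hx : ∀ j, x j ≠ 0 ∧ x j ≠ 1) :
    ∃ w ∈ -(normalFormSeq m a b x).sum ::ₘ normalFormSeq m a b x, w.2 ≠ 0 ∧ w.2 ≠ 1 := by
  rcases isEmpty_or_nonempty κ with hκ | ⟨⟨j⟩⟩
  · have hcard : (Fintype.card ι : ZMod p) + 1 = k := by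
      rw [Fintype.card_eq_zero (α := κ)] at hlen
      rw [← Nat.cast_add_one, show Fintype.card ι + 1 = p + k by omega]
      simp
    have hsum : (-(normalFormSeq m a b x).sum).2 = 1 - k := by
      simp [← hcard, normalFormSeq, Prod.snd_sum]
    have hk0 : (k : ZMod p) ≠ 0 := natCast_zmod_ne_zero_of_lt (by omega) hkp
    have hk1 : ((k - 1 : ℕ) : ZMod p) ≠ 0 := natCast_zmod_ne_zero_of_lt (by omega) (by omega)
    rw [Nat.cast_pred (by omega)] at hk1
    refine ⟨_, Multiset.mem_cons_self _ _, ?_⟩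
    rw [hsum]
    exact ⟨fun h => hk1 (by linear_combination -h), fun h => hk0 (by linear_combination -h)⟩
  · exact ⟨(b j, x j), Multiset.mem_cons_of_mem (right_mem_normalFormSeq j), hx j⟩

lemma IsZeroSumFree.eq_or_eq_add_one_of_normalFormSeq [Fact p.Prime] (hk : 2 ≤ k) (hkp : k + 2 ≤ p)
    (hlen : Fintype.card ι + Fintype.card κ = p - 1 + k) (hx : ∀ j, x j ≠ 0 ∧ x j ≠ 1)
    (h : IsZeroSumFree (normalFormSeq (p - 1 - k) a b x)) (i j : ι) :
    a i = a j ∨ a i = a j + 1 ∨ a j = a i + 1 := by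
  have h2 : (2 : ZMod p) ≠ 0 := natCast_zmod_ne_zero_of_lt (n := 2) two_pos (by omega)
  have hcard : (normalFormSeq (p - 1 - k) a b x).card = (Fintype.card (ZMod p) - 1) * 2 := by
    rw [card_normalFormSeq, ZMod.card, hlen]
    omega
  obtain ⟨w, hw, hw0, hw1⟩ := exists_mem_snd_ne_zero_ne_one hk (by omega) hlen hx
  exact h.isMinimalZeroSum_cons.eq_or_eq_add_one h2 (by rw [Multiset.card_cons, hcard])
    (Multiset.mem_cons_of_mem (one_zero_mem_normalFormSeq (by omega)))
    (Multiset.mem_cons_of_mem (left_mem_normalFormSeq i))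
    (Multiset.mem_cons_of_mem (left_mem_normalFormSeq j)) hw hw0 hw1

theorem stmt_8_general [Fact p.Prime] (hk : 2 ≤ k) (hkp : k ≤ p - 2) {G : Type*} [AddCommGroup G]
    [Module (ZMod p) G] (e₁ e₂ : G) (hlen : Fintype.card ι + Fintype.card κ = p - 1 + k)
    {I : Finset ι} (hI : I.card = p) (hsum : ∑ i ∈ I, a i = 1) (hx : ∀ j, x j ≠ 0 ∧ x j ≠ 1)
    (h : IsZeroSumFreeUpTo (2 * p - 1 - k) (Multiset.replicate (p - 1) e₁ +
      (Finset.univ.val.map fun i => a i • e₁ + e₂) +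
      Finset.univ.val.map fun j => b j • e₁ + x j • e₂)) :
    (∃ c, (Finset.univ.filter fun i => a i = c).card = p - 1) ∧
      ∀ c, (Finset.univ.filter fun i => a i = c).card ≤ p - 1 := by
  have hp4 : p ≠ 4 := fun hp4 => absurd (hp4 ▸ (Fact.out : p.Prime)) (by decide)
  have h3 : (3 : ZMod p) ≠ 0 := natCast_zmod_ne_zero_of_lt (n := 3) three_pos (by omega)
  let φ : ZMod p × ZMod p →ₗ[ZMod p] G :=
    (LinearMap.toSpanSingleton _ _ e₁).coprod (LinearMap.toSpanSingleton _ _ e₂)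
  have hcoord : IsZeroSumFreeUpTo (2 * p - 1 - k) (normalFormSeq (p - 1) a b x) :=
    .of_map φ.toAddMonoidHom (by simpa [normalFormSeq, φ, add_assoc, Function.comp_def] using h)
  have hshear : IsZeroSumFree (normalFormSeq (p - 1 - k) (a · - 1) (b · - 1) x) := by
    simpa [normalFormSeq] using hcoord.isZeroSumFree_shear (by simp) (by omega) (by simp [hlen])
  have hupper (c : ZMod p) : (Finset.univ.filter fun i => a i = c).card ≤ p - 1 := by
    have hlt := hshear.card_filter_eq_lt (n := p) (c - 1)
    simp only [sub_left_inj] at hlt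
    exact Nat.le_pred_of_lt hlt
  have hclose (i j : ι) : a i = a j ∨ a i = a j + 1 ∨ a j = a i + 1 := by
    simpa only [sub_left_inj, sub_add_cancel, sub_eq_iff_eq_add] using
      hshear.eq_or_eq_add_one_of_normalFormSeq hk (by omega) hlen hx i j
  obtain ⟨u, hu⟩ := exists_forall_eq_or_eq_add_one h3 hclose
  exact ⟨⟨u, (hupper u).antisymm (card_sub_one_le_card_filter_of_sum_eq_one hu hI hsum)⟩, hupper⟩

end Multiplicity

/-- Lemma: if `S = e₁^[p-1] · ∏(aᵢe₁+e₂) · ∏(bᵢe₁+xᵢe₂)` (with `xᵢ ∉ {0,1}`, `ℓ ≥ p`,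
`∑_{i=1}^p aᵢ = 1`) has no nonempty zero-sum subsequence of length at most `2p-1-k`, then
the maximum multiplicity of `∏(aᵢe₁+e₂)` is `p-1`: some value `a` is taken by exactly
`p-1` of the `aᵢ`, and no value is taken by more. -/
theorem stmt_8 (p : ℕ) (hp : p.Prime) (k : ℕ) (hk1 : 2 ≤ k) (hk2 : k ≤ p - 2)
    (e₁ e₂ : ZMod p × ZMod p)
    (hbasis : Function.Bijective (fun ab : ZMod p × ZMod p => ab.1 • e₁ + ab.2 • e₂))
    (ℓ v : ℕ) (hℓ : p ≤ ℓ) (hlen : (p - 1) + ℓ + v = 2 * p - 2 + k)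
    (a : Fin ℓ → ZMod p)
    (ha : ∑ i ∈ Finset.univ.filter (fun i : Fin ℓ => (i : ℕ) < p), a i = 1)
    (b x : Fin v → ZMod p) (hx : ∀ i, x i ≠ 0 ∧ x i ≠ 1)
    (S : Multiset (ZMod p × ZMod p))
    (hS : S = Multiset.replicate (p - 1) e₁ +
        Multiset.map (fun i => a i • e₁ + e₂) (Finset.univ : Finset (Fin ℓ)).val +
        Multiset.map (fun i => b i • e₁ + x i • e₂) (Finset.univ : Finset (Fin v)).val)
    (hzs : ∀ T ≤ S, T ≠ 0 → Multiset.card T ≤ 2 * p - 1 - k → T.sum ≠ 0) :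
    (∃ c : ZMod p, (Finset.univ.filter (fun i : Fin ℓ => a i = c)).card = p - 1) ∧
    (∀ c : ZMod p, (Finset.univ.filter (fun i : Fin ℓ => a i = c)).card ≤ p - 1) := by
  have : Fact p.Prime := ⟨hp⟩
  exact stmt_8_general hk1 hk2 e₁ e₂ (by simp only [Fintype.card_fin]; omega)
    (by rw [Fin.card_filter_val_lt, min_eq_right hℓ]) ha hx (hS ▸ hzs)
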